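/- Fix κ ∈ (0,4), N ≥ 2, M = ⌊N/2⌋, and real numbers y₁ ≤ ⋯ ≤ y_{N-1} < v. Then ∫_{v < u₁ < ⋯ < u_M} ∏_{1≤i≤N-1,1≤j≤M} (u_j - y_i)^{-4/κ} ∏_j (u_j - v)^{(2-κ)/κ} ∏_{i<j} (u_j - u_i)^{8/κ} du ≤ (v - y_{N-1})^{(4/κ)M(M - N + 1/2)} · ∫_{0 < u₁ < ⋯ < u_M < 1} ∏_{i<j}(u_j - u_i)^{8/κ} ∏_j u_j^{(4N - 8M + 2 - κ)/κ} (1 - u_j)^{(2-κ)/κ} du, and in particular the left-hand side is finite. -/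

import Mathlib

open MeasureTheory Real Set

/-!
The factors `u j - y i` carry a negative exponent, so moving every `y i` up to a common upper bound
`Y < v` only increases the integrand. The inversion `u = Y + (v - Y) / s`, applied to every
coordinate, maps `(0, 1)` onto `(v, ∞)`, with `s = 0` corresponding to `u = ∞`. It turns each factor
of the integrand and the Jacobian into powers of `s j`, `1 - s j`, `s j - s i` and `v - Y`, so the
integral with all `y i` equal to `Y` is a power of `v - Y` times a Selberg integral. The latter is
finite because its integrand is dominated by a product of one-variable Beta densities.
-/

section PairProducts

lemma prod_filter_lt_mul {ι M : Type*} [Fintype ι] [LinearOrder ι] [CommMonoid M] (g : ι → M) :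
    ∏ p : ι × ι with p.1 < p.2, g p.1 * g p.2 = ∏ i, g i ^ (Fintype.card ι - 1) := by
  have off_diagonal (i j : ι) :
      (if i < j then g i else 1) * (if j < i then g i else 1) =
        if j ∈ Finset.univ.erase i then g i else 1 := by
    rcases lt_trichotomy i j with h | rfl | h
    · simp [h, h.not_gt, h.ne']
    · simp
    · simp [h, h.not_gt, h.ne]
  rw [Finset.prod_mul_distrib, Finset.prod_filter, Finset.prod_filter, ← Finset.univ_product_univ,
    Finset.prod_product, Finset.prod_product_right, ← Finset.prod_mul_distrib]
  refine Finset.prod_congr rfl fun i _ ↦ ?_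
  simp_rw [← Finset.prod_mul_distrib, off_diagonal]
  rw [Finset.prod_ite_mem, Finset.univ_inter, Finset.prod_const,
    Finset.card_erase_of_mem (Finset.mem_univ i), Finset.card_univ]

lemma prod_filter_lt_rev {M : Type*} [CommMonoid M] {n : ℕ} (f : Fin n → Fin n → M) :
    ∏ p : Fin n × Fin n with p.1 < p.2, f p.2.rev p.1.rev =
      ∏ p : Fin n × Fin n with p.1 < p.2, f p.1 p.2 :=
  Finset.prod_nbij' (fun p ↦ (p.2.rev, p.1.rev)) (fun p ↦ (p.2.rev, p.1.rev))
    (by simp) (by simp) (by simp) (by simp) (by simp)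

end PairProducts

section OrderedTuples

variable {n : ℕ}

/-- The Weyl chamber over `s`: strictly increasing `n`-tuples of elements of `s`. The integrals
below are over such chambers, where the factors `u j - u i` with `i < j` are positive. -/
def orderedTuples {X : Type*} [Preorder X] (n : ℕ) (s : Set X) : Set (Fin n → X) :=
  {u | (∀ j, u j ∈ s) ∧ StrictMono u}

lemma orderedTuples_subset_pi {X : Type*} [Preorder X] {s : Set X} :
    orderedTuples n s ⊆ univ.pi fun _ ↦ s :=
  fun _ hu j _ ↦ hu.1 j

lemma image_orderedTuples_of_strictAntiOn {X Z : Type*} [LinearOrder X] [Preorder Z] {s : Set X}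
    {φ : X → Z} (hφ : StrictAntiOn φ s) :
    (fun (u : Fin n → X) j ↦ φ (u j.rev)) '' orderedTuples n s = orderedTuples n (φ '' s) := by
  apply Subset.antisymm
  · rintro _ ⟨u, ⟨hus, hu⟩, rfl⟩
    exact ⟨fun j ↦ mem_image_of_mem φ (hus j.rev),
      fun i j hij ↦ hφ (hus _) (hus _) (hu (Fin.rev_lt_rev.2 hij))⟩
  · rintro w ⟨hws, hw⟩
    choose x hxs hxw using hws
    refine ⟨fun j ↦ x j.rev, ⟨fun j ↦ hxs j.rev, fun i j hij ↦ ?_⟩, by simp [hxw]⟩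
    rw [← hφ.lt_iff_gt (hxs _) (hxs _), hxw, hxw]
    exact hw (Fin.rev_lt_rev.2 hij)

lemma injOn_orderedTuples_of_injOn {X Z : Type*} [Preorder X] {s : Set X} {φ : X → Z}
    (hφ : InjOn φ s) :
    InjOn (fun (u : Fin n → X) (j : Fin n) ↦ φ (u j.rev)) (orderedTuples n s) := by
  intro u hu w hw huw
  ext j
  simpa using hφ (hu.1 _) (hw.1 _) (congrFun huw j.rev)

variable {s : Set ℝ} {φ φ' : ℝ → ℝ} {E : Type*} [NormedAddCommGroup E] [NormedSpace ℝ E]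

lemma measurableSet_orderedTuples (hs : MeasurableSet s) :
    MeasurableSet (orderedTuples n s) := by
  have entries : MeasurableSet {u : Fin n → ℝ | ∀ j, u j ∈ s} :=
    MeasurableSet.univ_pi' fun _ ↦ hs
  have increasing : MeasurableSet {u : Fin n → ℝ | StrictMono u} := by
    simp only [StrictMono, ofPred_forall]
    exact .iInter fun i ↦ .iInter fun j ↦ .iInter fun _ ↦
      measurableSet_lt (measurable_pi_apply i) (measurable_pi_apply j)
  exact entries.inter increasing

lemma sub_pos_of_mem_orderedTuples {u : Fin n → ℝ} (hu : u ∈ orderedTuples n s)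
    {p : Fin n × Fin n} (hp : p ∈ Finset.univ.filter fun p : Fin n × Fin n ↦ p.1 < p.2) :
    0 < u p.2 - u p.1 :=
  sub_pos.2 (hu.2 (Finset.mem_filter.1 hp).2)

/-- The Jacobian of a coordinatewise map followed by the permutation `σ` of the coordinates, where
`d` lists the derivatives of the coordinate maps. -/
def permutedDiagonal {ι : Type*} (σ : Equiv.Perm ι) (d : ι → ℝ) : (ι → ℝ) →L[ℝ] (ι → ℝ) :=
  ContinuousLinearMap.pi fun j ↦ d (σ j) • ContinuousLinearMap.proj (σ j)

lemma abs_det_permutedDiagonal {ι : Type*} [Fintype ι] (σ : Equiv.Perm ι) (d : ι → ℝ) :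
    |(permutedDiagonal σ d).det| = ∏ j, |d j| := by
  classical
  have toLin : (permutedDiagonal σ d : (ι → ℝ) →ₗ[ℝ] (ι → ℝ)) =
      Matrix.toLin' ((Matrix.diagonal d).submatrix σ id) := by
    ext
    simp [permutedDiagonal, Matrix.mulVec, dotProduct, Matrix.diagonal_apply]
  have abs_sign : |((Equiv.Perm.sign σ : ℤ) : ℝ)| = 1 := by
    rw [← Int.cast_abs, Int.isUnit_iff_abs_eq.1 (Equiv.Perm.sign σ).isUnit, Int.cast_one]
  rw [ContinuousLinearMap.det, toLin, LinearMap.det_toLin', Matrix.det_permute, abs_mul, abs_sign,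
    one_mul, Matrix.det_diagonal, Finset.abs_prod]

lemma hasFDerivWithinAt_orderedTuples (hφ' : ∀ x ∈ s, HasDerivWithinAt φ (φ' x) s x)
    {u : Fin n → ℝ} (hu : u ∈ orderedTuples n s) :
    HasFDerivWithinAt (fun (u : Fin n → ℝ) j ↦ φ (u j.rev))
      (permutedDiagonal Fin.revPerm fun j ↦ φ' (u j)) (orderedTuples n s) u := by
  rw [hasFDerivWithinAt_pi']
  intro j
  exact (hφ' _ (hu.1 j.rev)).comp_hasFDerivWithinAt u
    (ContinuousLinearMap.proj (R := ℝ) (φ := fun _ : Fin n ↦ ℝ) j.rev).hasFDerivWithinAt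
    fun w hw ↦ hw.1 j.rev

lemma integrableOn_orderedTuples_image_iff (hs : MeasurableSet s) (hφ : StrictAntiOn φ s)
    (hφ' : ∀ x ∈ s, HasDerivWithinAt φ (φ' x) s x) (F : (Fin n → ℝ) → E) :
    IntegrableOn F (orderedTuples n (φ '' s)) ↔
      IntegrableOn (fun u ↦ (∏ j, |φ' (u j)|) • F fun j ↦ φ (u j.rev)) (orderedTuples n s) := by
  rw [← image_orderedTuples_of_strictAntiOn hφ,
    integrableOn_image_iff_integrableOn_abs_det_fderiv_smul volume
      (measurableSet_orderedTuples hs) (fun _ ↦ hasFDerivWithinAt_orderedTuples hφ')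
      (injOn_orderedTuples_of_injOn hφ.injOn)]
  simp only [abs_det_permutedDiagonal]

lemma setIntegral_orderedTuples_image (hs : MeasurableSet s) (hφ : StrictAntiOn φ s)
    (hφ' : ∀ x ∈ s, HasDerivWithinAt φ (φ' x) s x) (F : (Fin n → ℝ) → E) :
    ∫ w in orderedTuples n (φ '' s), F w =
      ∫ u in orderedTuples n s, (∏ j, |φ' (u j)|) • F fun j ↦ φ (u j.rev) := by
  rw [← image_orderedTuples_of_strictAntiOn hφ,
    integral_image_eq_integral_abs_det_fderiv_smul volume
      (measurableSet_orderedTuples hs) (fun _ ↦ hasFDerivWithinAt_orderedTuples hφ')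
      (injOn_orderedTuples_of_injOn hφ.injOn)]
  simp only [abs_det_permutedDiagonal]

end OrderedTuples

section SelbergIntegrand

variable {n : ℕ} {a b γ : ℝ}

/-- The Vandermonde product of `u` with every factor raised to the power `γ`: the mutual interaction
of `n` equal charges. The factors `u j - u i` with `i < j` are positive on ordered tuples, and
`Real.rpow` is only meaningful there. -/
noncomputable def vandermondeRpow (γ : ℝ) (u : Fin n → ℝ) : ℝ :=
  ∏ p : Fin n × Fin n with p.1 < p.2, (u p.2 - u p.1) ^ γ

lemma vandermondeRpow_nonneg {s : Set ℝ} {u : Fin n → ℝ} (hu : u ∈ orderedTuples n s) :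
    0 ≤ vandermondeRpow γ u :=
  Finset.prod_nonneg fun _ hp ↦ rpow_nonneg (sub_pos_of_mem_orderedTuples hu hp).le γ

lemma vandermondeRpow_le_one (hγ : 0 ≤ γ) {u : Fin n → ℝ}
    (hu : u ∈ orderedTuples n (Ioo 0 1)) : vandermondeRpow γ u ≤ 1 := by
  refine Finset.prod_le_one
    (fun _ hp ↦ rpow_nonneg (sub_pos_of_mem_orderedTuples hu hp).le γ) fun p hp ↦
    rpow_le_one (sub_pos_of_mem_orderedTuples hu hp).le ?_ hγ
  linarith [(hu.1 p.2).2, (hu.1 p.1).1]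

/-- The integrand of the Selberg integral with exponents `a` at `0`, `b` at `1` and `γ` between the
variables. -/
noncomputable def selbergIntegrand (a b γ : ℝ) (u : Fin n → ℝ) : ℝ :=
  vandermondeRpow γ u * ∏ j, u j ^ a * (1 - u j) ^ b

lemma measurable_selbergIntegrand : Measurable (selbergIntegrand (n := n) a b γ) := by
  unfold selbergIntegrand vandermondeRpow
  fun_prop

lemma integrableOn_rpow_mul_one_sub_rpow (ha : -1 < a) (hb : -1 < b) :
    IntegrableOn (fun x : ℝ ↦ x ^ a * (1 - x) ^ b) (Ioo 0 1) := by
  have beta := Complex.betaIntegral_convergent (u := (a + 1 : ℝ)) (v := (b + 1 : ℝ))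
    (by rw [Complex.ofReal_re]; linarith) (by rw [Complex.ofReal_re]; linarith)
  rw [intervalIntegrable_iff_integrableOn_Ioo_of_le zero_le_one] at beta
  refine IntegrableOn.congr_fun (Integrable.norm beta) (fun x hx ↦ ?_) measurableSet_Ioo
  have one_sub : (1 - x : ℂ) = ((1 - x : ℝ) : ℂ) := by push_cast; rfl
  rw [norm_mul, one_sub, Complex.norm_cpow_eq_rpow_re_of_pos hx.1,
    Complex.norm_cpow_eq_rpow_re_of_pos (sub_pos.2 hx.2)]
  simp

lemma integrableOn_selbergIntegrand (ha : -1 < a) (hb : -1 < b) (hγ : 0 ≤ γ) :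
    IntegrableOn (selbergIntegrand a b γ) (orderedTuples n (Ioo 0 1)) := by
  have product : IntegrableOn (fun u : Fin n → ℝ ↦ ∏ j, u j ^ a * (1 - u j) ^ b)
      (univ.pi fun _ ↦ Ioo 0 1) := by
    rw [IntegrableOn, volume_pi, Measure.restrict_pi_pi]
    exact Integrable.fintype_prod fun _ ↦ integrableOn_rpow_mul_one_sub_rpow ha hb
  refine Integrable.mono' (product.mono_set orderedTuples_subset_pi)
    measurable_selbergIntegrand.aestronglyMeasurable
    (ae_restrict_of_forall_mem (measurableSet_orderedTuples measurableSet_Ioo) fun u hu ↦ ?_)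
  have product_nonneg : 0 ≤ ∏ j, u j ^ a * (1 - u j) ^ b := Finset.prod_nonneg fun j _ ↦
    mul_nonneg (rpow_nonneg (hu.1 j).1.le a) (rpow_nonneg (sub_pos.2 (hu.1 j).2).le b)
  rw [selbergIntegrand, norm_of_nonneg (mul_nonneg (vandermondeRpow_nonneg hu) product_nonneg)]
  exact mul_le_of_le_one_left product_nonneg (vandermondeRpow_le_one hγ hu)

end SelbergIntegrand

section Inversion

variable {Y c : ℝ}

lemma strictAntiOn_add_div (hc : 0 < c) : StrictAntiOn (fun x ↦ Y + c / x) (Ioi 0) :=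
  fun _ hx _ _ hxy ↦ add_lt_add_right (div_lt_div_of_pos_left hc hx hxy) Y

lemma image_add_sub_div_Ioo {v : ℝ} (hYv : Y < v) :
    (fun x ↦ Y + (v - Y) / x) '' Ioo 0 1 = Ioi v := by
  have c_pos : 0 < v - Y := sub_pos.2 hYv
  ext u
  constructor
  · rintro ⟨x, hx, rfl⟩
    have : v - Y < (v - Y) / x := (lt_div_iff₀ hx.1).2 (mul_lt_of_lt_one_right c_pos hx.2)
    exact sub_lt_iff_lt_add'.1 this
  · intro hu
    have lt_u : v - Y < u - Y := sub_lt_sub_right hu Y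
    have u_pos : 0 < u - Y := c_pos.trans lt_u
    refine ⟨(v - Y) / (u - Y), ⟨div_pos c_pos u_pos, (div_lt_one u_pos).2 lt_u⟩, ?_⟩
    simp only [div_div_cancel₀ c_pos.ne', add_sub_cancel]

lemma hasDerivAt_add_div {x : ℝ} (hx : x ≠ 0) :
    HasDerivAt (fun x ↦ Y + c / x) (-c / x ^ 2) x := by
  convert! ((hasDerivAt_inv hx).const_mul c).const_add Y using 1
  ring

lemma vandermondeRpow_add_div_rev {n : ℕ} (γ : ℝ) (hc : 0 ≤ c) {s : Fin n → ℝ}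
    (hs : s ∈ orderedTuples n (Ioi 0)) :
    vandermondeRpow γ (fun j ↦ Y + c / s j.rev) =
      (∏ j, (√c / s j) ^ (γ * (n - 1))) * vandermondeRpow γ s := by
  have s_pos (j) : 0 < s j := hs.1 j
  have weight (j : Fin n) : (√c / s j) ^ (γ * (n - 1)) = ((√c / s j) ^ γ) ^ (n - 1) := by
    rw [← rpow_mul_natCast (div_nonneg (sqrt_nonneg c) (s_pos j).le), Nat.cast_pred j.pos]
  have pairs := prod_filter_lt_mul fun j ↦ (√c / s j) ^ γ
  rw [Fintype.card_fin] at pairs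
  simp_rw [vandermondeRpow, weight]
  rw [← pairs, ← Finset.prod_mul_distrib,
    prod_filter_lt_rev fun i j ↦ (Y + c / s i - (Y + c / s j)) ^ γ]
  refine Finset.prod_congr rfl fun p hp ↦ ?_
  have h₁ := s_pos p.1
  have h₂ := s_pos p.2
  rw [← mul_rpow (by positivity) (by positivity),
    ← mul_rpow (by positivity) (sub_pos_of_mem_orderedTuples hs hp).le,
    div_mul_div_comm, mul_self_sqrt hc]
  congr 1
  field_simp
  ring

lemma jacobian_mul_weights_add_div {A β G p x : ℝ} (hc : 0 < c) (hx : x ∈ Ioo 0 1)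
    (hneutral : A + β + G + p + 2 = 0) :
    c / x ^ 2 * (c / x) ^ A * (c * (1 - x) / x) ^ β * (√c / x) ^ G =
      c ^ (-(p + 1 + G / 2)) * (x ^ p * (1 - x) ^ β) := by
  have x_pos : 0 < x := hx.1
  have one_sub_pos : 0 < 1 - x := sub_pos.2 hx.2
  have c_exponent : -(p + 1 + G / 2) = 1 + A + β + 1 / 2 * G := by linarith
  have x_exponent : p = -(2 + A + β + G) := by linarith
  rw [c_exponent, x_exponent, rpow_neg x_pos.le, rpow_add hc, rpow_add hc, rpow_add hc, rpow_one,
    rpow_add x_pos, rpow_add x_pos, rpow_add x_pos, rpow_two, rpow_mul hc.le, ← sqrt_eq_rpow,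
    div_rpow hc.le x_pos.le, div_rpow (by positivity) x_pos.le, mul_rpow hc.le one_sub_pos.le,
    div_rpow (sqrt_nonneg c) x_pos.le]
  field_simp

end Inversion

section CoulombGas

variable {ι : Type*} [Fintype ι] {n : ℕ} {α β γ p Y v : ℝ} {y : ι → ℝ}

/-- The Coulomb gas integrand in the variables `u`, with exponent `α` towards the marked points
`y i`, `β` towards the marked point `v` and `γ` between the variables. -/
noncomputable def coulombGasIntegrand (α β γ : ℝ) (y : ι → ℝ) (v : ℝ) (u : Fin n → ℝ) : ℝ :=
  (∏ i, ∏ j, (u j - y i) ^ α) * (∏ j, (u j - v) ^ β) * vandermondeRpow γ u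

lemma measurable_coulombGasIntegrand :
    Measurable (coulombGasIntegrand (n := n) α β γ y v) := by
  unfold coulombGasIntegrand vandermondeRpow
  fun_prop

lemma coulombGasIntegrand_nonneg (hy : ∀ i, y i ≤ v) {u : Fin n → ℝ}
    (hu : u ∈ orderedTuples n (Ioi v)) : 0 ≤ coulombGasIntegrand α β γ y v u := by
  have sub_y_nonneg (i j) : 0 ≤ u j - y i := sub_nonneg.2 ((hy i).trans (hu.1 j).le)
  have sub_v_nonneg (j) : 0 ≤ u j - v := sub_nonneg.2 (hu.1 j).le
  exact mul_nonneg (mul_nonneg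
    (Finset.prod_nonneg fun i _ ↦ Finset.prod_nonneg fun j _ ↦ rpow_nonneg (sub_y_nonneg i j) α)
    (Finset.prod_nonneg fun j _ ↦ rpow_nonneg (sub_v_nonneg j) β)) (vandermondeRpow_nonneg hu)

lemma coulombGasIntegrand_mono (hα : α ≤ 0) {z : ι → ℝ} (hyz : y ≤ z) (hz : ∀ i, z i ≤ v)
    {u : Fin n → ℝ} (hu : u ∈ orderedTuples n (Ioi v)) :
    coulombGasIntegrand α β γ y v u ≤ coulombGasIntegrand α β γ z v u := by
  have sub_v_pos (j) : 0 < u j - v := sub_pos.2 (hu.1 j)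
  have sub_z_pos (i j) : 0 < u j - z i := (sub_v_pos j).trans_le (sub_le_sub_left (hz i) _)
  have sub_y_pos (i j) : 0 < u j - y i := (sub_z_pos i j).trans_le (sub_le_sub_left (hyz i) _)
  have factor_le (i j) : (u j - y i) ^ α ≤ (u j - z i) ^ α :=
    rpow_le_rpow_of_nonpos (sub_z_pos i j) (sub_le_sub_left (hyz i) _) hα
  have y_product_le : ∏ i, ∏ j, (u j - y i) ^ α ≤ ∏ i, ∏ j, (u j - z i) ^ α :=
    Finset.prod_le_prod
      (fun i _ ↦ Finset.prod_nonneg fun j _ ↦ rpow_nonneg (sub_y_pos i j).le α) fun i _ ↦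
      Finset.prod_le_prod (fun j _ ↦ rpow_nonneg (sub_y_pos i j).le α) fun j _ ↦ factor_le i j
  exact mul_le_mul_of_nonneg_right (mul_le_mul_of_nonneg_right y_product_le
    (Finset.prod_nonneg fun j _ ↦ rpow_nonneg (sub_v_pos j).le β)) (vandermondeRpow_nonneg hu)

/- The relation between the exponents is the neutrality condition of the Coulomb gas: `p` is the
exponent at the image `0` of `∞` under the inversion. -/
lemma jacobian_mul_coulombGasIntegrand_const (hYv : Y < v)
    (hneutral : α * Fintype.card ι + β + γ * (n - 1) + p + 2 = 0) {s : Fin n → ℝ}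
    (hs : s ∈ orderedTuples n (Ioo 0 1)) :
    (∏ j, |-(v - Y) / s j ^ 2|) •
        coulombGasIntegrand α β γ (fun _ : ι ↦ Y) v (fun j ↦ Y + (v - Y) / s j.rev) =
      (v - Y) ^ (-(n * (p + 1 + γ * (n - 1) / 2))) * selbergIntegrand p β γ s := by
  have c_pos : 0 < v - Y := sub_pos.2 hYv
  have s_pos (j) : 0 < s j := (hs.1 j).1
  have jacobian (j) : |-(v - Y) / s j ^ 2| = (v - Y) / s j ^ 2 := by
    rw [neg_div, abs_neg, abs_of_pos (div_pos c_pos (pow_pos (s_pos j) 2))]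
  have y_factor : ∏ _i : ι, ∏ j : Fin n, (Y + (v - Y) / s j.rev - Y) ^ α =
      ∏ j, ((v - Y) / s j) ^ (α * Fintype.card ι) := by
    simp_rw [add_sub_cancel_left, Finset.prod_const, Finset.card_univ, ← Finset.prod_pow,
      fun j ↦ rpow_mul_natCast (div_pos c_pos (s_pos j)).le α (Fintype.card ι)]
    exact Equiv.prod_comp Fin.revPerm fun j ↦ (((v - Y) / s j) ^ α) ^ Fintype.card ι
  have v_factor : ∏ j : Fin n, (Y + (v - Y) / s j.rev - v) ^ β =
      ∏ j, ((v - Y) * (1 - s j) / s j) ^ β := by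
    rw [← Equiv.prod_comp Fin.revPerm]
    refine Finset.prod_congr rfl fun j _ ↦ congrArg (· ^ β) ?_
    have := (s_pos j).ne'
    simp only [Fin.revPerm_apply, Fin.rev_rev]
    field_simp
    ring
  have scale : (v - Y) ^ (-(n * (p + 1 + γ * (n - 1) / 2))) =
      ∏ _j : Fin n, (v - Y) ^ (-(p + 1 + γ * (n - 1) / 2)) := by
    rw [Finset.prod_const, Finset.card_univ, Fintype.card_fin, ← rpow_mul_natCast c_pos.le]
    ring_nf
  have weights := Finset.prod_congr rfl fun j (_ : j ∈ Finset.univ) ↦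
    jacobian_mul_weights_add_div c_pos (hs.1 j) hneutral
  simp only [smul_eq_mul, coulombGasIntegrand, selbergIntegrand, jacobian, y_factor, v_factor,
    scale, vandermondeRpow_add_div_rev γ c_pos.le ⟨s_pos, hs.2⟩]
  simp only [Finset.prod_mul_distrib] at weights ⊢
  linear_combination vandermondeRpow γ s * weights

lemma integrableOn_coulombGasIntegrand_const (hp : -1 < p) (hβ : -1 < β) (hγ : 0 ≤ γ)
    (hYv : Y < v) (hneutral : α * Fintype.card ι + β + γ * (n - 1) + p + 2 = 0) :
    IntegrableOn (coulombGasIntegrand α β γ (fun _ : ι ↦ Y) v) (orderedTuples n (Ioi v)) := by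
  have c_pos : 0 < v - Y := sub_pos.2 hYv
  rw [← image_add_sub_div_Ioo hYv, integrableOn_orderedTuples_image_iff measurableSet_Ioo
      ((strictAntiOn_add_div c_pos).mono Ioo_subset_Ioi_self)
      fun x hx ↦ (hasDerivAt_add_div hx.1.ne').hasDerivWithinAt]
  refine (integrableOn_congr_fun
    (fun _ ↦ jacobian_mul_coulombGasIntegrand_const hYv hneutral)
    (measurableSet_orderedTuples measurableSet_Ioo)).2 ?_
  exact (integrableOn_selbergIntegrand hp hβ hγ).const_mul _

lemma setIntegral_coulombGasIntegrand_const (hYv : Y < v)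
    (hneutral : α * Fintype.card ι + β + γ * (n - 1) + p + 2 = 0) :
    ∫ u in orderedTuples n (Ioi v), coulombGasIntegrand α β γ (fun _ : ι ↦ Y) v u =
      (v - Y) ^ (-(n * (p + 1 + γ * (n - 1) / 2))) *
        ∫ s in orderedTuples n (Ioo 0 1), selbergIntegrand p β γ s := by
  have c_pos : 0 < v - Y := sub_pos.2 hYv
  rw [← image_add_sub_div_Ioo hYv, setIntegral_orderedTuples_image measurableSet_Ioo
      ((strictAntiOn_add_div c_pos).mono Ioo_subset_Ioi_self)
      fun x hx ↦ (hasDerivAt_add_div hx.1.ne').hasDerivWithinAt,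
    setIntegral_congr_fun (measurableSet_orderedTuples measurableSet_Ioo)
      fun _ ↦ jacobian_mul_coulombGasIntegrand_const hYv hneutral, integral_const_mul]

lemma integrableOn_coulombGasIntegrand (hα : α ≤ 0) (hp : -1 < p) (hβ : -1 < β) (hγ : 0 ≤ γ)
    (hy : ∀ i, y i ≤ Y) (hYv : Y < v)
    (hneutral : α * Fintype.card ι + β + γ * (n - 1) + p + 2 = 0) :
    IntegrableOn (coulombGasIntegrand α β γ y v) (orderedTuples n (Ioi v)) := by
  refine Integrable.mono' (integrableOn_coulombGasIntegrand_const hp hβ hγ hYv hneutral)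
    measurable_coulombGasIntegrand.aestronglyMeasurable
    (ae_restrict_of_forall_mem (measurableSet_orderedTuples measurableSet_Ioi) fun u hu ↦ ?_)
  rw [norm_of_nonneg (coulombGasIntegrand_nonneg (fun i ↦ (hy i).trans hYv.le) hu)]
  exact coulombGasIntegrand_mono hα hy (fun _ ↦ hYv.le) hu

lemma setIntegral_coulombGasIntegrand_le (hα : α ≤ 0) (hp : -1 < p) (hβ : -1 < β) (hγ : 0 ≤ γ)
    (hy : ∀ i, y i ≤ Y) (hYv : Y < v)
    (hneutral : α * Fintype.card ι + β + γ * (n - 1) + p + 2 = 0) :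
    ∫ u in orderedTuples n (Ioi v), coulombGasIntegrand α β γ y v u ≤
      (v - Y) ^ (-(n * (p + 1 + γ * (n - 1) / 2))) *
        ∫ s in orderedTuples n (Ioo 0 1), selbergIntegrand p β γ s := by
  rw [← setIntegral_coulombGasIntegrand_const hYv hneutral]
  exact setIntegral_mono_on (integrableOn_coulombGasIntegrand hα hp hβ hγ hy hYv hneutral)
    (integrableOn_coulombGasIntegrand_const hp hβ hγ hYv hneutral)
    (measurableSet_orderedTuples measurableSet_Ioi)
    fun _ ↦ coulombGasIntegrand_mono hα hy fun _ ↦ hYv.le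

end CoulombGas

theorem stmt6_general {ι : Type*} [Fintype ι] {κ : ℝ} (hκ : 0 < κ) {N M : ℕ}
    (hN : Fintype.card ι + 1 = N) (hM : 2 * M ≤ N) {y : ι → ℝ} {Y v : ℝ}
    (hy : ∀ i, y i ≤ Y) (hYv : Y < v) :
    IntegrableOn (coulombGasIntegrand (-4 / κ) ((2 - κ) / κ) (8 / κ) y v)
      (orderedTuples M (Ioi v)) ∧
    ∫ u in orderedTuples M (Ioi v), coulombGasIntegrand (-4 / κ) ((2 - κ) / κ) (8 / κ) y v u ≤
      (v - Y) ^ ((4 / κ) * (M : ℝ) * ((M : ℝ) - (N : ℝ) + 1 / 2)) *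
        ∫ s in orderedTuples M (Ioo 0 1),
          selbergIntegrand ((4 * (N : ℝ) - 8 * (M : ℝ) + 2 - κ) / κ) ((2 - κ) / κ) (8 / κ) s := by
  have hα : -4 / κ ≤ 0 := div_nonpos_of_nonpos_of_nonneg (by norm_num) hκ.le
  have hβ : -1 < (2 - κ) / κ := by
    rw [lt_div_iff₀ hκ]
    linarith
  have hγ : 0 ≤ 8 / κ := by positivity
  have hp : -1 < (4 * (N : ℝ) - 8 * (M : ℝ) + 2 - κ) / κ := by
    have : 2 * (M : ℝ) ≤ N := mod_cast hM
    rw [lt_div_iff₀ hκ]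
    linarith
  have hneutral : -4 / κ * Fintype.card ι + (2 - κ) / κ + 8 / κ * ((M : ℝ) - 1) +
      (4 * (N : ℝ) - 8 * (M : ℝ) + 2 - κ) / κ + 2 = 0 := by
    rw [← hN]
    push_cast
    field_simp
    ring
  have scale : (4 / κ) * (M : ℝ) * ((M : ℝ) - (N : ℝ) + 1 / 2) =
      -(M * ((4 * (N : ℝ) - 8 * (M : ℝ) + 2 - κ) / κ + 1 + 8 / κ * (M - 1) / 2)) := by
    field_simp
    ring
  rw [scale]
  exact ⟨integrableOn_coulombGasIntegrand hα hp hβ hγ hy hYv hneutral,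
    setIntegral_coulombGasIntegrand_le hα hp hβ hγ hy hYv hneutral⟩

theorem stmt6 (κ : ℝ) (hκ : κ ∈ Set.Ioo (0:ℝ) 4) (N : ℕ) (hN : 2 ≤ N)
    (y : Fin (N - 1) → ℝ) (hy : Monotone y) (v : ℝ) (hyv : ∀ i, y i < v) :
    IntegrableOn
      (fun u : Fin (N / 2) → ℝ =>
        (∏ i : Fin (N - 1), ∏ j : Fin (N / 2), (u j - y i) ^ (-4 / κ)) *
          (∏ j : Fin (N / 2), (u j - v) ^ ((2 - κ) / κ)) *
          ∏ p ∈ Finset.univ.filter (fun p : Fin (N / 2) × Fin (N / 2) => p.1 < p.2),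
            (u p.2 - u p.1) ^ (8 / κ))
      {u : Fin (N / 2) → ℝ | (∀ j, v < u j) ∧ StrictMono u} volume ∧
    (∫ u in {u : Fin (N / 2) → ℝ | (∀ j, v < u j) ∧ StrictMono u},
        (∏ i : Fin (N - 1), ∏ j : Fin (N / 2), (u j - y i) ^ (-4 / κ)) *
          (∏ j : Fin (N / 2), (u j - v) ^ ((2 - κ) / κ)) *
          ∏ p ∈ Finset.univ.filter (fun p : Fin (N / 2) × Fin (N / 2) => p.1 < p.2),
            (u p.2 - u p.1) ^ (8 / κ))
      ≤ (v - y ⟨N - 2, by omega⟩) ^ ((4 / κ) * ((N / 2 : ℕ) : ℝ) * (((N / 2 : ℕ) : ℝ) - (N : ℝ) + 1 / 2)) *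
        ∫ u in {u : Fin (N / 2) → ℝ | (∀ j, u j ∈ Set.Ioo (0:ℝ) 1) ∧ StrictMono u},
          (∏ p ∈ Finset.univ.filter (fun p : Fin (N / 2) × Fin (N / 2) => p.1 < p.2),
              (u p.2 - u p.1) ^ (8 / κ)) *
            ∏ j : Fin (N / 2),
              (u j) ^ ((4 * (N : ℝ) - 8 * ((N / 2 : ℕ) : ℝ) + 2 - κ) / κ) * (1 - u j) ^ ((2 - κ) / κ) :=
  stmt6_general hκ.1 (by rw [Fintype.card_fin]; omega) (Nat.mul_div_le N 2)
    (fun i ↦ hy (Fin.le_def.2 (by dsimp only; omega))) (hyv _)
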